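/- The groups G(+) = G₆ ⋊_{ja} ℤ and G(−) = G₆ ⋊_{jb} ℤ are not isomorphic. (This follows since the class [ja] in Out(G₆) is not conjugate to [jb] or [jb]⁻¹: indeed (ja)³ = 1 while (jb)³ = d∘e⁻¹∘f represents a nontrivial element of Out(G₆).) -/

import Mathlib

/-! `Aff(3) = ℝ³ ⋊ GL(3,ℝ)`, realized as the group of affine self-equivalences of `ℝ³`
(with multiplication given by composition, so that `(v,A)(w,B) = (v + Aw, AB)`). -/

abbrev V3 : Type := Fin 3 → ℝ
abbrev Aff3 : Type := V3 ≃ᵃ[ℝ] V3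

/-- The linear self-equivalence of `ℝ³` given by a diagonal matrix with entries `±1`. -/
noncomputable def diagLin (d : Fin 3 → ℝ) (hd : ∀ i, d i * d i = 1) : V3 ≃ₗ[ℝ] V3 where
  toFun v := fun i => d i * v i
  invFun v := fun i => d i * v i
  map_add' u v := by funext i; simp [mul_add]
  map_smul' c v := by funext i; simp [smul_eq_mul]; ring
  left_inv v := by funext i; simp [← mul_assoc, hd i]
  right_inv v := by funext i; simp [← mul_assoc, hd i]

lemma sq_one_X : ∀ i, (![(1:ℝ),-1,-1]) i * (![(1:ℝ),-1,-1]) i = 1 := by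
  intro i; fin_cases i <;> norm_num

lemma sq_one_Y : ∀ i, (![(-1:ℝ),1,-1]) i * (![(-1:ℝ),1,-1]) i = 1 := by
  intro i; fin_cases i <;> norm_num

/-- The affine transformation `x = (½e₁, X)`, acting by `w ↦ Xw + ½e₁`,
where `X = diag[1,−1,−1]`. -/
noncomputable def affx : Aff3 :=
  ((diagLin ![1,-1,-1] sq_one_X).toAffineEquiv).trans
    (AffineEquiv.constVAdd ℝ V3 ![1/2, 0, 0])

/-- The affine transformation `y = (½(e₂−e₃), Y)`, acting by `w ↦ Yw + ½(e₂−e₃)`,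
where `Y = diag[−1,1,−1]`. -/
noncomputable def affy : Aff3 :=
  ((diagLin ![-1,1,-1] sq_one_Y).toAffineEquiv).trans
    (AffineEquiv.constVAdd ℝ V3 ![0, 1/2, -1/2])

/-- `z = xy = (½(e₁−e₂+e₃), Z)`. -/
noncomputable def affz : Aff3 := affx * affy

/-- The Hantzsche–Wendt group `G₆`, the subgroup of `Aff(3)` generated by `x` and `y`. -/
noncomputable def G6 : Subgroup Aff3 := Subgroup.closure {affx, affy}

/-- The translation subgroup `T = G₆ ∩ (ℝ³ × {I})`: the elements of `G₆`
whose linear part is the identity. -/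
noncomputable def TT : Subgroup Aff3 :=
  G6 ⊓ (AffineEquiv.linearHom : Aff3 →* (V3 ≃ₗ[ℝ] V3)).ker

lemma affx_mem : affx ∈ G6 := Subgroup.subset_closure (by simp)
lemma affy_mem : affy ∈ G6 := Subgroup.subset_closure (by simp)

/-- `x` as an element of `G₆`. -/
noncomputable def xg : G6 := ⟨affx, affx_mem⟩
/-- `y` as an element of `G₆`. -/
noncomputable def yg : G6 := ⟨affy, affy_mem⟩
/-- `z = xy` as an element of `G₆`. -/
noncomputable def zg : G6 := xg * yg

/-!
Since `x² y x² = y` and `y² x y² = x`, the group `G₆` has no nontrivial homomorphism to `ℤ`. An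
isomorphism `G₆ ⋊_φ ℤ ≃ G₆ ⋊_ψ ℤ` therefore respects the projections to `ℤ` up to sign, so it
restricts to an automorphism of `G₆` carrying the outer class of `φ` to that of `ψ` or `ψ⁻¹`. But
`(ja)³ = 1`, whereas `(jb)³` sends `x` to `z x⁻¹ z⁻¹`, hence is not inner, as `x` and `x⁻¹`
are not conjugate in `G₆`.
-/

section OuterAutomorphisms

instance range_conj_normal {G : Type*} [Group G] : (MulAut.conj : G →* MulAut G).range.Normal where
  conj_mem := by
    rintro _ ⟨g, rfl⟩ φ
    exact ⟨φ g, by ext; simp⟩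

/-- The outer automorphism group `Out(G)`, the quotient of `Aut(G)` by the inner automorphisms. -/
abbrev OuterAut (G : Type*) [Group G] : Type _ :=
  MulAut G ⧸ (MulAut.conj : G →* MulAut G).range

variable {G : Type*} [Group G]

lemma OuterAut.mk_conj (g : G) : (MulAut.conj g : OuterAut G) = 1 :=
  (QuotientGroup.eq_one_iff _).2 ⟨g, rfl⟩

lemma isConj_apply_of_outerAut_eq_one {φ : MulAut G} (hφ : (φ : OuterAut G) = 1) (g : G) :
    IsConj g (φ g) := by
  obtain ⟨c, rfl⟩ := (QuotientGroup.eq_one_iff φ).1 hφ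
  exact isConj_iff.2 ⟨c, rfl⟩

end OuterAutomorphisms

section SemidirectProducts

open SemidirectProduct

variable {N M G H : Type*} [Group N] [Group M] [Group G] [Group H]
  {φ : G →* MulAut N} {ψ : H →* MulAut M}

lemma right_map_eq_right_map_inr (hN : ∀ χ : N →* H, χ = 1) (f : N ⋊[φ] G →* M ⋊[ψ] H)
    (g : N ⋊[φ] G) : (f g).right = (f (inr g.right)).right := by
  have hinl : (f (inl g.left)).right = 1 :=
    DFunLike.congr_fun (hN ((rightHom.comp f).comp inl)) g.left
  conv_lhs => rw [← inl_left_mul_inr_right g, map_mul, mul_right, hinl, one_mul]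

lemma exists_mulEquiv_map_inl (e : N ⋊[φ] G ≃* M ⋊[ψ] H)
    (he : ∀ g, (e g).right = 1 ↔ g.right = 1) :
    ∃ θ : N ≃* M, ∀ n, e (inl n) = inl (θ n) := by
  have hright (n : N) : (e (inl n)).right = 1 := (he _).2 (right_inl n)
  have hinl (n : N) : inl (e (inl n)).left = e (inl n) :=
    SemidirectProduct.ext (left_inl _) (hright n).symm
  let f : N →* M := MonoidHom.mk' (fun n => (e (inl n)).left) fun m n => by
    simp only [map_mul, mul_left, hright, map_one, MulAut.one_apply]
  have hinj : Function.Injective f := fun m n hmn =>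
    inl_injective (e.injective (by rw [← hinl m, ← hinl n]; exact congrArg inl hmn))
  have hsurj : Function.Surjective f := fun m => by
    obtain ⟨g, hg⟩ := e.surjective (inl m)
    have hgr : g.right = 1 := (he g).1 (by rw [hg, right_inl])
    have hgl : inl g.left = g := SemidirectProduct.ext (left_inl _) hgr.symm
    refine ⟨g.left, ?_⟩
    change (e (inl g.left)).left = m
    rw [hgl, hg, left_inl]
  exact ⟨MulEquiv.ofBijective f ⟨hinj, hsurj⟩, fun n => (hinl n).symm⟩

lemma congr_eq_conj_mul_of_map_inl {f : N ⋊[φ] G →* M ⋊[ψ] H} {θ : N ≃* M}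
    (hθ : ∀ n, f (inl n) = inl (θ n)) (g : G) :
    MulAut.congr θ (φ g) = MulAut.conj (f (inr g)).left * ψ (f (inr g)).right := by
  ext m
  obtain ⟨n, rfl⟩ := θ.surjective m
  apply inl_injective (φ := ψ)
  have hdecomp := inl_left_mul_inr_right (f (inr g))
  calc inl (MulAut.congr θ (φ g) (θ n))
      = f (inl (φ g n)) := by simp [MulAut.congr, hθ]
    _ = f (inr g) * inl (θ n) * (f (inr g))⁻¹ := by
      rw [inl_aut, map_mul, map_mul, hθ, map_inv, map_inv]
    _ = inl ((MulAut.conj (f (inr g)).left * ψ (f (inr g)).right) (θ n)) := by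
      nth_rw 1 2 [← hdecomp]
      simp only [MulAut.mul_apply, MulAut.conj_apply, map_mul, map_inv, inl_aut, mul_inv_rev,
        mul_assoc]

end SemidirectProducts

section MappingTori

open SemidirectProduct

/-- The mapping torus `N ⋊_φ ℤ` of an automorphism `φ`, with the generator of `ℤ` acting as `φ`. -/
abbrev MappingTorus {N : Type*} [Group N] (φ : MulAut N) : Type _ :=
  N ⋊[zpowersHom (MulAut N) φ] Multiplicative ℤ

lemma multiplicativeInt_hom_eq_id_or_eq_inv_of_surjective {η : Multiplicative ℤ →* Multiplicative ℤ}
    (hη : Function.Surjective η) : η = MonoidHom.id _ ∨ η = (MonoidHom.id _)⁻¹ := by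
  have hη_apply (k : Multiplicative ℤ) : η k = η (.ofAdd 1) ^ k.toAdd := by
    rw [← map_zpow, ← ofAdd_zsmul, smul_eq_mul, mul_one, ofAdd_toAdd]
  obtain ⟨k, hk⟩ := hη (.ofAdd 1)
  have hunit : (η (.ofAdd 1)).toAdd * k.toAdd = 1 := by
    rw [hη_apply] at hk
    rw [mul_comm, ← smul_eq_mul, ← toAdd_zpow, hk, toAdd_ofAdd]
  rcases Int.isUnit_iff.1 (.of_mul_eq_one _ hunit) with h | h
  · exact .inl (MonoidHom.ext_mint (Multiplicative.toAdd.injective h))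
  · exact .inr (MonoidHom.ext_mint (Multiplicative.toAdd.injective h))

variable {N M : Type*} [Group N] [Group M]

theorem MappingTorus.exists_outerAut_congr_eq_or_eq_inv {φ : MulAut N} {ψ : MulAut M}
    (hN : ∀ χ : N →* Multiplicative ℤ, χ = 1) (e : MappingTorus φ ≃* MappingTorus ψ) :
    ∃ θ : N ≃* M, (MulAut.congr θ φ : OuterAut M) = ψ ∨
      (MulAut.congr θ φ : OuterAut M) = (ψ : OuterAut M)⁻¹ := by
  let η : Multiplicative ℤ →* Multiplicative ℤ := rightHom.comp (e.toMonoidHom.comp inr)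
  have hη (g : MappingTorus φ) : (e g).right = η g.right :=
    right_map_eq_right_map_inr hN e.toMonoidHom g
  have hη_surj : Function.Surjective η := fun k => by
    obtain ⟨g, hg⟩ := e.surjective (inr k)
    exact ⟨g.right, by rw [← hη, hg, right_inr]⟩
  have hη_sign := multiplicativeInt_hom_eq_id_or_eq_inv_of_surjective hη_surj
  have hright (g : MappingTorus φ) : (e g).right = 1 ↔ g.right = 1 := by
    rcases hη_sign with h | h <;> simp [hη, h]
  obtain ⟨θ, hθ⟩ := exists_mulEquiv_map_inl e hright
  have hcongr : (MulAut.congr θ φ : OuterAut M) = (ψ : OuterAut M) ^ (η (.ofAdd 1)).toAdd := by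
    have h := congr_eq_conj_mul_of_map_inl (f := e.toMonoidHom) hθ (.ofAdd 1)
    rw [zpowersHom_apply, toAdd_ofAdd, zpow_one] at h
    rw [h, QuotientGroup.mk_mul, OuterAut.mk_conj, one_mul, zpowersHom_apply,
      QuotientGroup.mk_zpow]
    rfl
  refine ⟨θ, ?_⟩
  rcases hη_sign with h | h
  · exact .inl (by simpa [h] using hcongr)
  · exact .inr (by simpa [h] using hcongr)

end MappingTori

section HantzscheWendt

lemma affx_apply (w : V3) : affx w = ![w 0 + 1 / 2, -w 1, -w 2] := by
  ext i
  fin_cases i <;> simp [affx, diagLin, add_comm]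

lemma affy_apply (w : V3) : affy w = ![-w 0, w 1 + 1 / 2, -w 2 - 1 / 2] := by
  ext i
  fin_cases i <;> simp [affy, diagLin] <;> ring

lemma xg_sq_mul_yg_mul_xg_sq : xg ^ 2 * yg * xg ^ 2 = yg := by
  ext w i
  change affx (affx (affy (affx (affx w)))) i = affy w i
  fin_cases i <;> simp [affx_apply, affy_apply]
  ring

lemma yg_sq_mul_xg_mul_yg_sq : yg ^ 2 * xg * yg ^ 2 = xg := by
  ext w i
  change affy (affy (affx (affy (affy w)))) i = affx w i
  fin_cases i <;> simp [affx_apply, affy_apply]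

lemma G6_hom_ext {M : Type*} [Group M] {f g : G6 →* M} (hx : f xg = g xg) (hy : f yg = g yg) :
    f = g := by
  refine MonoidHom.eq_of_eqOn_dense Subgroup.closure_closure_coe_preimage ?_
  rintro ⟨_, _⟩ (rfl | rfl)
  exacts [hx, hy]

lemma G6_hom_eq_one {A : Type*} [CommGroup A] [IsMulTorsionFree A] (χ : G6 →* A) : χ = 1 := by
  have eq_one_of_sq_mul_mul_sq {u v : A} (h : u ^ 2 * v * u ^ 2 = v) : u = 1 := by
    have hu : u ^ 4 = 1 := by
      rw [mul_right_comm, mul_eq_right, ← pow_add] at h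
      exact h
    exact (pow_eq_one_iff_left four_ne_zero).1 hu
  apply G6_hom_ext <;> apply eq_one_of_sq_mul_mul_sq
  · simpa only [map_mul, map_pow] using congrArg χ xg_sq_mul_yg_mul_xg_sq
  · simpa only [map_mul, map_pow] using congrArg χ yg_sq_mul_xg_mul_yg_sq

/-- The affine maps that act separately on the first two coordinates, on the second one by a map
`s ↦ ±s + n/2` with `n` an integer and on the first one with linear part `(-1)ⁿ`. This coupling is
the invariant that distinguishes `x` from the conjugates of `x⁻¹` in `G₆`. -/
def parityCoupledSubgroup : Subgroup Aff3 where
  carrier := {h | ∃ (n : ℤ) (δ : ℤˣ) (r : ℝ), ∀ w : V3,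
    h w 0 = (n.negOnePow : ℤ) * w 0 + r ∧ h w 1 = (δ : ℤ) * w 1 + n / 2}
  one_mem' := ⟨0, 1, 0, fun w => by simp⟩
  mul_mem' := by
    rintro g h ⟨n, δ, r, hg⟩ ⟨m, ε, s, hh⟩
    have hparity : (n + δ * m).negOnePow = n.negOnePow * m.negOnePow := by
      rcases Int.units_eq_one_or δ with rfl | rfl <;> simp [Int.negOnePow_add]
    refine ⟨n + δ * m, δ * ε, n.negOnePow * s + r, fun w => ?_⟩
    rw [hparity, AffineEquiv.mul_def, AffineEquiv.trans_apply, (hg _).1, (hg _).2, (hh _).1,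
      (hh _).2]
    push_cast
    constructor <;> ring
  inv_mem' := by
    rintro h ⟨n, δ, r, hh⟩
    have hparity : (-(δ * n)).negOnePow = n.negOnePow := by
      rcases Int.units_eq_one_or δ with rfl | rfl <;> simp [Int.negOnePow_neg]
    have unit_mul_self (ε : ℤˣ) : (ε : ℝ) * ε = 1 := by
      rcases Int.units_eq_one_or ε with rfl | rfl <;> simp
    refine ⟨-(δ * n), δ, -(n.negOnePow * r), fun w => ?_⟩
    obtain ⟨v, rfl⟩ := h.surjective w
    have hv : h⁻¹ (h v) = v := h.symm_apply_apply v
    rw [hparity, hv, (hh v).1, (hh v).2]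
    push_cast
    constructor
    · linear_combination (-v 0) * unit_mul_self n.negOnePow
    · linear_combination (-v 1) * unit_mul_self δ

lemma G6_le_parityCoupledSubgroup : G6 ≤ parityCoupledSubgroup := by
  refine (Subgroup.closure_le _).2 ?_
  rintro _ (rfl | rfl)
  · exact ⟨0, -1, 1 / 2, fun w => by simp [affx_apply]⟩
  · exact ⟨1, 1, 0, fun w => by simp [affy_apply]⟩

lemma not_isConj_xg_inv : ¬ IsConj xg xg⁻¹ := by
  rw [isConj_iff]
  rintro ⟨g, hg⟩
  have hfix : xg * g * xg = g := by
    rw [mul_assoc, mul_inv_eq_iff_eq_mul.1 hg, mul_inv_cancel_left]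
  obtain ⟨n, δ, r, hcoord⟩ := G6_le_parityCoupledSubgroup g.2
  have hfix_zero : affx (g.1 (affx 0)) = g.1 0 := congrArg (fun h : G6 => h.1 0) hfix
  have hn : n = 0 := by
    have h : -((n : ℝ) / 2) = n / 2 := by
      simpa [affx_apply, hcoord] using congrFun hfix_zero 1
    exact_mod_cast (by linarith : (n : ℝ) = 0)
  have h : (2 : ℝ)⁻¹ + r + 2⁻¹ = r := by
    simpa [affx_apply, hcoord, hn] using congrFun hfix_zero 0
  linarith

lemma G6_aut_pow_three_eq_one {φ : MulAut G6} (hx : φ xg = zg⁻¹) (hy : φ yg = xg) : φ ^ 3 = 1 := by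
  have hz : φ zg⁻¹ = yg := by
    rw [map_inv, zg, map_mul, hx, hy, mul_inv_rev, inv_inv, zg, inv_mul_cancel_left]
  apply MulEquiv.toMonoidHom_injective
  apply G6_hom_ext
  · change φ (φ (φ xg)) = xg
    rw [hx, hz, hy]
  · change φ (φ (φ yg)) = yg
    rw [hy, hx, hz]

lemma G6_outerAut_pow_three_ne_one {ψ : MulAut G6} (hx : ψ xg = zg) (hy : ψ yg = xg⁻¹) :
    (ψ : OuterAut G6) ^ 3 ≠ 1 := by
  have hz : ψ zg = zg * xg⁻¹ := by rw [zg, map_mul, hx, hy, zg]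
  have hpow : (ψ ^ 3) xg = zg * xg⁻¹ * zg⁻¹ := by
    change ψ (ψ (ψ xg)) = _
    rw [hx, hz, map_mul, hz, map_inv, hx]
  intro hout
  have hconj : IsConj xg (zg * xg⁻¹ * zg⁻¹) := hpow ▸ isConj_apply_of_outerAut_eq_one hout xg
  exact not_isConj_xg_inv (hconj.trans (isConj_iff.2 ⟨zg, rfl⟩).symm)

end HantzscheWendt

/-- The groups `G(+) = G₆ ⋊_{ja} ℤ` and `G(−) = G₆ ⋊_{jb} ℤ` are not
isomorphic.  Here `G₆ ⋊_φ ℤ` is the semidirect product in which the generator of `ℤ`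
acts on `G₆` by the automorphism `φ`. -/
theorem statement11 :
    ∀ a b j : MulAut G6,
      a xg = xg⁻¹ → a yg = yg →
      b xg = xg → b yg = yg⁻¹ →
      j xg = zg → j yg = xg →
      IsEmpty
        ((G6 ⋊[zpowersHom (MulAut G6) (j * a)] Multiplicative ℤ) ≃*
         (G6 ⋊[zpowersHom (MulAut G6) (j * b)] Multiplicative ℤ)) := by
  intro a b j hax hay hbx hby hjx hjy
  refine ⟨fun e => ?_⟩
  have ja_pow : (j * a) ^ 3 = 1 :=
    G6_aut_pow_three_eq_one (by simp [hax, hjx]) (by simp [hay, hjy])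
  have jb_pow : ((j * b : MulAut G6) : OuterAut G6) ^ 3 ≠ 1 :=
    G6_outerAut_pow_three_ne_one (by simp [hbx, hjx]) (by simp [hby, hjy])
  obtain ⟨θ, hθ⟩ := MappingTorus.exists_outerAut_congr_eq_or_eq_inv G6_hom_eq_one e
  have congr_pow : (MulAut.congr θ (j * a) : OuterAut G6) ^ 3 = 1 := by
    rw [← QuotientGroup.mk_pow, ← map_pow, ja_pow, map_one, QuotientGroup.mk_one]
  rcases hθ with h | h <;> rw [h] at congr_pow
  · exact jb_pow congr_pow
  · exact jb_pow (inv_eq_one.1 (inv_pow (j * b : OuterAut G6) 3 ▸ congr_pow))
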